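/- arXiv:1804.00367 — 2 statements merged into one kernel-verified Lean document; each statement's English description precedes it below -/
import Mathlib

section
/- Let (G,+) be a finite abelian group and E a field of characteristic 0 or of characteristic p not dividing |G| containing a primitive N-th root of unity, N = exp(G). A nonzero function f : G → E satisfies |supp(f)| · |supp(f̂)| = |G| if and only if there exist λ ∈ E \ {0}, an E-valued character χ of G, an element a ∈ G, and a subgroup H of G such that f = λ·χ·1_{a+H}, i.e., f(x) = λ·χ(x) for x ∈ a + H and f(x) = 0 otherwise. -/
open Function Set

/-- The Fourier transform of `f : G → E`, `f̂(χ) = ∑_{x ∈ G} f(x) χ(-x)`. -/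
def fourierTransform {G E : Type*} [AddCommGroup G] [Fintype G] [Field E]
    (f : G → E) (χ : AddChar G E) : E :=
  ∑ x, f x * χ (-x)

/-!
The translates of `f` span a space of dimension `|supp f̂|`: the Fourier transform embeds this span
into the functions on `supp f̂`, and the span contains every `χ ∈ supp f̂` because
`∑ y, χ y • τ y f = f̂ χ • χ`. A basis of the span chosen among the translates consists of functions
with supports of size `|supp f|`, and these supports cover `G`, whence `|G| ≤ |supp f| |supp f̂|`.
When equality holds, the supports in every such basis partition `G`, so two translates of `f` are
proportional or have disjoint supports. Hence `supp f` is a coset of the subgroup of those `y` for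
which `τ y f` is proportional to `f`, and the factor is `χ (-y)` for any `χ ∈ supp f̂`.
-/

open Module Submodule
open scoped translate Pointwise

section SupportCover

variable {X K ι : Type*}

lemma support_subset_biUnion_of_mem_span [Semiring K] {T : Set (X → K)} {g : X → K}
    (hg : g ∈ span K T) : support g ⊆ ⋃ t ∈ T, support t := by
  intro x hx
  by_contra hxT
  have hT : span K T ≤ LinearMap.ker (LinearMap.proj x) :=
    span_le.2 fun t ht => by_contra fun htx => hxT (mem_biUnion ht htx)
  exact hx (hT hg)

lemma pairwiseDisjoint_of_sum_ncard_le_ncard_biUnion [Finite X] {t : Finset ι} {s : ι → Set X}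
    (h : ∑ i ∈ t, (s i).ncard ≤ (⋃ i ∈ t, s i).ncard) : (t : Set ι).PairwiseDisjoint s := by
  classical
  intro i hi j hj hij
  set rest := ⋃ k ∈ t.erase i, s k with hrest
  have hunion : ⋃ k ∈ t, s k = s i ∪ rest := by
    rw [hrest, ← Finset.set_biUnion_insert, Finset.insert_erase hi]
  have hrest_le : rest.ncard ≤ ∑ k ∈ t.erase i, (s k).ncard := Finset.set_ncard_biUnion_le _ _
  have hsum := Finset.add_sum_erase t (fun k => (s k).ncard) hi
  have hinter := ncard_union_add_ncard_inter (s i) rest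
  have hdisj : Disjoint (s i) rest := by
    rw [disjoint_iff_inter_eq_empty, ← ncard_eq_zero]
    rw [hunion] at h
    lia
  exact hdisj.mono_right (subset_biUnion_of_mem (u := s) (Finset.mem_erase.2 ⟨hij.symm, hj⟩))

variable [DivisionRing K] [Finite X] {S T : Set (X → K)} {k : ℕ}

lemma exists_finset_card_eq_finrank_span_biUnion_support_eq (hS : LinearIndepOn K id S)
    (hST : S ⊆ T) :
    ∃ B : Finset (X → K), S ⊆ B ∧ (B : Set (X → K)) ⊆ T ∧ B.card = finrank K (span K T) ∧
      ⋃ b ∈ B, support b = ⋃ t ∈ T, support t := by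
  have hB := hS.linearIndepOn_extend hST
  have hBT := hS.extend_subset hST
  have hfin : (hS.extend hST).Finite := hB.finite
  refine ⟨hfin.toFinset, ?_, ?_, ?_, ?_⟩
  · simpa using hS.subset_extend hST
  · simpa using hBT
  · rw [← hS.span_extend_eq_span hST, ← finrank_span_finset_eq_card (by simpa using hB),
      hfin.coe_toFinset]
  · simp only [hfin.mem_toFinset]
    refine (biUnion_subset_biUnion_left hBT).antisymm (iUnion₂_subset fun t ht => ?_)
    exact support_subset_biUnion_of_mem_span (hS.subset_span_extend hST ht)

theorem ncard_biUnion_support_le_finrank_span_mul (hk : ∀ t ∈ T, (support t).ncard ≤ k) :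
    (⋃ t ∈ T, support t).ncard ≤ finrank K (span K T) * k := by
  obtain ⟨B, -, hBT, hcard, hcover⟩ :=
    exists_finset_card_eq_finrank_span_biUnion_support_eq
      (linearIndepOn_empty K id) (empty_subset T)
  rw [← hcover, ← hcard, ← smul_eq_mul]
  exact (Finset.set_ncard_biUnion_le _ _).trans
    (Finset.sum_le_card_nsmul _ _ _ fun b hb => hk b (hBT hb))

theorem pairwiseDisjoint_support_of_finrank_span_mul_le (hk : ∀ t ∈ T, (support t).ncard ≤ k)
    (h : finrank K (span K T) * k ≤ (⋃ t ∈ T, support t).ncard)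
    (hS : LinearIndepOn K id S) (hST : S ⊆ T) : S.PairwiseDisjoint support := by
  obtain ⟨B, hSB, hBT, hcard, hcover⟩ :=
    exists_finset_card_eq_finrank_span_biUnion_support_eq hS hST
  refine (pairwiseDisjoint_of_sum_ncard_le_ncard_biUnion ?_).subset hSB
  rw [← hcard, ← smul_eq_mul, ← hcover] at h
  exact (Finset.sum_le_card_nsmul _ _ _ fun b hb => hk b (hBT hb)).trans h

end SupportCover

section Translates

variable {G : Type*} [AddCommGroup G]

/-- The span of all translates of `f`, the cyclic submodule that `f` generates in the regular
representation of `G` on functions. -/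
def translateSpan (K : Type*) [Semiring K] (f : G → K) : Submodule K (G → K) :=
  span K (range fun y => τ y f)

/-- The subgroup of those `y` for which `f` is an eigenvector of the translation by `y`, with the
eigenvalue `χ (-y)` that this translation has on `χ` itself. -/
def eigenPeriods {M α : Type*} [Monoid M] [MulAction M α] (f : G → α) (χ : AddChar G M) :
    AddSubgroup G where
  carrier := {y | τ y f = χ (-y) • f}
  zero_mem' := by simp
  add_mem' {y z} (hy : τ y f = _) (hz : τ z f = _) := by
    rw [mem_ofPred_eq, translate_add, hz, translate_smul_right, hy, smul_smul,
      ← AddChar.map_add_eq_mul, neg_add_rev]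
  neg_mem' {y} (hy : τ y f = _) := by
    have h := congrArg (fun g => χ y • τ (-y) g) hy
    simpa [translate_translate, smul_smul, ← AddChar.map_add_eq_mul] using h.symm

lemma mem_eigenPeriods {M α : Type*} [Monoid M] [MulAction M α] {f : G → α} {χ : AddChar G M}
    {y : G} : y ∈ eigenPeriods f χ ↔ τ y f = χ (-y) • f := Iff.rfl

lemma ncard_support_translate {A : Type*} [AddCommGroup A] (f : G → A) (y : G) :
    (support (τ y f)).ncard = (support f).ncard := by
  rw [support_translate, ncard_vadd_set]

lemma biUnion_support_translate {A : Type*} [AddCommGroup A] {f : G → A} (hf : f ≠ 0) :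
    ⋃ t ∈ range (fun y => τ y f), support t = univ := by
  obtain ⟨a, ha⟩ := ne_iff.1 hf
  refine eq_univ_of_forall fun x => ?_
  exact mem_biUnion (mem_range_self (x - a)) (by rwa [mem_support, translate_apply, sub_sub_cancel])

variable {K : Type*} [DivisionRing K] {f : G → K}

theorem card_le_finrank_translateSpan_mul_ncard_support [Finite G] (hf : f ≠ 0) :
    Nat.card G ≤ finrank K (translateSpan K f) * (support f).ncard := by
  rw [← ncard_univ, ← biUnion_support_translate hf]
  exact ncard_biUnion_support_le_finrank_span_mul
    (forall_mem_range.2 fun y => (ncard_support_translate f y).le)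

theorem exists_translate_eq_smul_or_disjoint_support [Finite G] (hf : f ≠ 0)
    (h : finrank K (translateSpan K f) * (support f).ncard = Nat.card G) (y : G) :
    (∃ c : K, τ y f = c • f) ∨ Disjoint (support f) (support (τ y f)) := by
  refine or_iff_not_imp_left.2 fun hc => ?_
  push Not at hc
  have hne : f ≠ τ y f := fun hy => hc 1 (by rw [one_smul, ← hy])
  have hindep : LinearIndepOn K id {f, τ y f} :=
    (linearIndepOn_pair_iff id hne hf).2 fun c => (hc c).symm
  have hsub : {f, τ y f} ⊆ range fun y => τ y f :=
    pair_subset ⟨0, translate_zero f⟩ ⟨y, rfl⟩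
  refine pairwiseDisjoint_support_of_finrank_span_mul_le
    (forall_mem_range.2 fun z => (ncard_support_translate f z).le) ?_ hindep hsub
    (mem_insert _ _) (mem_insert_of_mem _ rfl) hne
  rw [biUnion_support_translate hf, ncard_univ]
  exact h.le

theorem finrank_translateSpan_le_index {H : AddSubgroup G} [H.FiniteIndex]
    (hH : ∀ y ∈ H, ∃ c : K, τ y f = c • f) :
    finrank K (translateSpan K f) ≤ H.index := by
  have := Fintype.ofFinite (G ⧸ H)
  let v : G ⧸ H → G → K := fun q => τ q.out f
  have hspan : translateSpan K f ≤ span K (range v) := by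
    refine span_le.2 (forall_mem_range.2 fun y => ?_)
    obtain ⟨h, hh⟩ := QuotientAddGroup.mk_out_eq_add H y
    obtain ⟨c, hc⟩ := hH (-h) (neg_mem h.2)
    have hy : τ y f = c • v y := by
      rw [← translate_smul_right, ← hc, translate_translate, hh, add_neg_cancel_right]
    rw [hy]
    exact smul_mem _ _ (subset_span (mem_range_self _))
  rw [AddSubgroup.index_eq_card, Nat.card_eq_fintype_card]
  have := FiniteDimensional.span_of_finite K (finite_range v)
  exact (Submodule.finrank_mono hspan).trans (finrank_range_le_card v)

end Translates

section Characters

lemma linearIndependent_addChar (A R : Type*) [AddMonoid A] [CommRing R] [IsDomain R] :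
    LinearIndependent R ((⇑) : AddChar A R → A → R) :=
  (linearIndependent_monoidHom (Multiplicative A) R).comp _ AddChar.toMonoidHomEquiv.injective

instance finite_addChar {A R : Type*} [AddMonoid A] [Finite A] [CommRing R] [IsDomain R] :
    Finite (AddChar A R) :=
  (linearIndependent_addChar A R).finite

variable {G : Type*} [AddCommGroup G] [Finite G]

lemma card_addChar_of_hasEnoughRootsOfUnity {M : Type*} [CommMonoid M]
    [HasEnoughRootsOfUnity M (AddMonoid.exponent G)] : Nat.card (AddChar G M) = Nat.card G := by
  have : HasEnoughRootsOfUnity M (Monoid.exponent (Multiplicative G)) := by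
    rwa [Monoid.exponent_multiplicative]
  calc Nat.card (AddChar G M) = Nat.card (Multiplicative G →* Mˣ) :=
        Nat.card_congr (AddChar.toMonoidHomEquiv.trans MonoidHom.toHomUnitsMulEquiv.toEquiv)
    _ = Nat.card (Multiplicative G) := CommGroup.card_monoidHom_of_hasEnoughRootsOfUnity _ M
    _ = Nat.card G := Nat.card_congr Multiplicative.toAdd

lemma span_range_addChar_eq_top {E : Type*} [Field E]
    [HasEnoughRootsOfUnity E (AddMonoid.exponent G)] :
    span E (range ((⇑) : AddChar G E → G → E)) = ⊤ := by
  have := Fintype.ofFinite G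
  have := Fintype.ofFinite (AddChar G E)
  refine (linearIndependent_addChar G E).span_eq_top_of_card_eq_finrank' ?_
  rw [finrank_fintype_fun_eq_card, ← Nat.card_eq_fintype_card, ← Nat.card_eq_fintype_card,
    card_addChar_of_hasEnoughRootsOfUnity]

end Characters

section FourierTransform

variable {G E : Type*} [AddCommGroup G] [Fintype G] [Field E] (f : G → E)

variable (G E) in
/-- The Fourier transform as an `E`-linear map, so that its injectivity gives dimension bounds. -/
def fourierLinearMap : (G → E) →ₗ[E] (AddChar G E → E) where
  toFun := fourierTransform
  map_add' f g := by
    funext χ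
    simp [fourierTransform, add_mul, Finset.sum_add_distrib]
  map_smul' c f := by
    funext χ
    simp [fourierTransform, mul_assoc, Finset.mul_sum]

lemma fourierLinearMap_injective [HasEnoughRootsOfUnity E (AddMonoid.exponent G)] :
    Injective (fourierLinearMap G E) := by
  refine (injective_iff_map_eq_zero _).2 fun f hf => dotProduct_eq_zero f fun g => ?_
  have hg : g ∈ span E (range ((⇑) : AddChar G E → G → E)) := by
    rw [span_range_addChar_eq_top]
    exact mem_top
  induction hg using span_induction with
  | mem _ hχ =>
    obtain ⟨χ, rfl⟩ := hχ
    simpa [fourierLinearMap, fourierTransform, dotProduct] using congrFun hf (-χ)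
  | zero => exact dotProduct_zero f
  | add _ _ _ _ hg hh => rw [dotProduct_add, hg, hh, add_zero]
  | smul c _ _ hg => rw [dotProduct_smul, hg, smul_zero]

lemma fourierTransform_translate (y : G) (χ : AddChar G E) :
    fourierTransform (τ y f) χ = χ (-y) * fourierTransform f χ := by
  simp only [fourierTransform, Finset.mul_sum]
  rw [← sum_translate y fun x => χ (-y) * (f x * χ (-x))]
  refine Finset.sum_congr rfl fun x _ => ?_
  have hχ : χ (-x) = χ (-y) * χ (-(x - y)) := by
    rw [← AddChar.map_add_eq_mul]
    congr 1
    abel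
  rw [translate_apply, translate_apply, hχ]
  ring

lemma sum_smul_translate (χ : AddChar G E) :
    ∑ y, χ y • τ y f = fourierTransform f χ • ⇑χ := by
  funext x
  simp only [Finset.sum_apply, Pi.smul_apply, smul_eq_mul, translate_apply, fourierTransform,
    Finset.sum_mul]
  refine Fintype.sum_equiv (Equiv.subLeft x) _ _ fun y => ?_
  have hχ : χ y = χ (-(x - y)) * χ x := by
    rw [← AddChar.map_add_eq_mul, neg_sub, sub_add_cancel]
  rw [Equiv.subLeft_apply, hχ]
  ring

lemma ncard_support_fourierTransform_le_finrank_translateSpan :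
    (support (fourierTransform f)).ncard ≤ finrank E (translateSpan E f) := by
  have hmem : ∀ χ : support (fourierTransform f), ⇑χ.1 ∈ translateSpan E f := fun χ => by
    rw [← (translateSpan E f).smul_mem_iff χ.2, ← sum_smul_translate]
    exact sum_mem fun y _ => smul_mem _ _ (subset_span (mem_range_self y))
  have hindep : LinearIndependent E fun χ => (⟨χ.1, hmem χ⟩ : translateSpan E f) :=
    .of_comp (translateSpan E f).subtype
      ((linearIndependent_addChar G E).comp _ Subtype.val_injective)
  have := Fintype.ofFinite (support (fourierTransform f))
  simpa [← Nat.card_eq_fintype_card, Nat.card_coe_set_eq] using hindep.fintype_card_le_finrank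

lemma fourierTransform_eq_zero_of_mem_translateSpan {f g : G → E} (hg : g ∈ translateSpan E f)
    {χ : AddChar G E} (hχ : fourierTransform f χ = 0) : fourierTransform g χ = 0 := by
  have hle : translateSpan E f ≤ LinearMap.ker (LinearMap.proj χ ∘ₗ fourierLinearMap G E) :=
    span_le.2 <| forall_mem_range.2 fun y => by
      change fourierTransform (τ y f) χ = 0
      rw [fourierTransform_translate, hχ, mul_zero]
  exact hle hg

lemma finrank_translateSpan_le_ncard_support_fourierTransform
    [HasEnoughRootsOfUnity E (AddMonoid.exponent G)] :
    finrank E (translateSpan E f) ≤ (support (fourierTransform f)).ncard := by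
  have := Fintype.ofFinite (support (fourierTransform f))
  let restrict : translateSpan E f →ₗ[E] (support (fourierTransform f) → E) :=
    LinearMap.funLeft E E Subtype.val ∘ₗ fourierLinearMap G E ∘ₗ (translateSpan E f).subtype
  have hinj : Injective restrict := by
    refine (injective_iff_map_eq_zero _).2 fun g hg => Subtype.ext ?_
    refine (map_eq_zero_iff (fourierLinearMap G E) fourierLinearMap_injective).1 ?_
    funext χ
    by_cases hχ : fourierTransform f χ = 0
    · exact fourierTransform_eq_zero_of_mem_translateSpan g.2 hχ
    · exact congrFun hg ⟨χ, hχ⟩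
  simpa [← Nat.card_eq_fintype_card, Nat.card_coe_set_eq] using
    LinearMap.finrank_le_finrank_of_injective hinj

theorem finrank_translateSpan_eq_ncard_support_fourierTransform
    [HasEnoughRootsOfUnity E (AddMonoid.exponent G)] :
    finrank E (translateSpan E f) = (support (fourierTransform f)).ncard :=
  (finrank_translateSpan_le_ncard_support_fourierTransform f).antisymm
    (ncard_support_fourierTransform_le_finrank_translateSpan f)

variable {f}

lemma mem_eigenPeriods_of_translate_eq_smul {χ : AddChar G E} (hχ : fourierTransform f χ ≠ 0)
    {y : G} {c : E} (h : τ y f = c • f) : y ∈ eigenPeriods f χ := by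
  have hc : fourierTransform (c • f) χ = c * fourierTransform f χ :=
    congrFun ((fourierLinearMap G E).map_smul c f) χ
  rw [← h, fourierTransform_translate] at hc
  rw [mem_eigenPeriods, h, mul_right_cancel₀ hχ hc]

end FourierTransform

section CosetCharacter

variable {G E : Type*} [AddCommGroup G] [Field E] {f : G → E} {l : E} {χ : AddChar G E} {a : G}
  {H : AddSubgroup G}

lemma support_eq_vadd_of_eq_mul_addChar (hl : l ≠ 0) (hmem : ∀ x, x - a ∈ H → f x = l * χ x)
    (hnot_mem : ∀ x, x - a ∉ H → f x = 0) : support f = a +ᵥ (H : Set G) := by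
  ext x
  rw [mem_vadd_set_iff_neg_vadd_mem, vadd_eq_add, neg_add_eq_sub, SetLike.mem_coe, mem_support]
  refine ⟨not_imp_comm.1 (hnot_mem x), fun hx => ?_⟩
  rw [hmem x hx]
  exact mul_ne_zero hl (χ.val_isUnit x).ne_zero

lemma le_eigenPeriods_of_eq_mul_addChar (hmem : ∀ x, x - a ∈ H → f x = l * χ x)
    (hnot_mem : ∀ x, x - a ∉ H → f x = 0) : H ≤ eigenPeriods f χ := by
  refine fun y hy => mem_eigenPeriods.2 (funext fun x => ?_)
  have hiff : x - y - a ∈ H ↔ x - a ∈ H := by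
    rw [sub_right_comm, sub_eq_add_neg _ y, H.add_mem_cancel_right (neg_mem hy)]
  rw [translate_apply, Pi.smul_apply, smul_eq_mul]
  by_cases hx : x - a ∈ H
  · rw [hmem _ (hiff.2 hx), hmem x hx, sub_eq_add_neg, AddChar.map_add_eq_mul]
    ring
  · rw [hnot_mem _ (mt hiff.1 hx), hnot_mem x hx, mul_zero]

lemma eq_mul_addChar_of_sub_mem_eigenPeriods {x : G} (hx : x - a ∈ eigenPeriods f χ) :
    f x = χ (-a) * f a * χ x := by
  have h := congrFun (mem_eigenPeriods.1 (neg_mem hx)) a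
  rw [translate_apply, sub_neg_eq_add, add_sub_cancel, neg_neg, sub_eq_add_neg,
    Pi.smul_apply, AddChar.map_add_eq_mul, smul_eq_mul] at h
  rw [h]
  ring

theorem finrank_translateSpan_mul_ncard_support_le_card [Finite G] (hl : l ≠ 0)
    (hmem : ∀ x, x - a ∈ H → f x = l * χ x) (hnot_mem : ∀ x, x - a ∉ H → f x = 0) :
    finrank E (translateSpan E f) * (support f).ncard ≤ Nat.card G := by
  have hperiod : ∀ y ∈ H, ∃ c : E, τ y f = c • f := fun y hy =>
    ⟨_, mem_eigenPeriods.1 (le_eigenPeriods_of_eq_mul_addChar hmem hnot_mem hy)⟩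
  have hsupp : (support f).ncard = Nat.card H := by
    rw [support_eq_vadd_of_eq_mul_addChar hl hmem hnot_mem, ncard_vadd_set]
    rfl
  rw [hsupp, ← H.index_mul_card]
  exact Nat.mul_le_mul_right _ (finrank_translateSpan_le_index hperiod)

end CosetCharacter

/-- equality in the Donoho–Stark uncertainty principle holds iff
`f = λ·χ·1_{a+H}` for some nonzero `λ`, character `χ`, element `a ∈ G` and subgroup `H`. -/
theorem stmt_12 {G E : Type*} [AddCommGroup G] [Fintype G] [Field E]
    (hchar : (Fintype.card G : E) ≠ 0)
    (hroot : ∃ ζ : E, IsPrimitiveRoot ζ (AddMonoid.exponent G))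
    (f : G → E) (hf : f ≠ 0) :
    (Function.support f).ncard * (Function.support (fourierTransform f)).ncard
        = Fintype.card G ↔
      ∃ (l : E) (χ : AddChar G E) (a : G) (H : AddSubgroup G), l ≠ 0 ∧
        (∀ x : G, x - a ∈ H → f x = l * χ x) ∧ (∀ x : G, x - a ∉ H → f x = 0) := by
  have : NeZero (AddMonoid.exponent G) := ⟨AddMonoid.exponent_ne_zero_of_finite⟩
  have : HasEnoughRootsOfUnity E (AddMonoid.exponent G) := ⟨hroot, inferInstance⟩
  rw [mul_comm, ← finrank_translateSpan_eq_ncard_support_fourierTransform,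
    ← Nat.card_eq_fintype_card]
  constructor
  · intro heq
    obtain ⟨a, ha⟩ : ∃ a, f a ≠ 0 := ne_iff.1 hf
    obtain ⟨χ, hχ⟩ : ∃ χ, fourierTransform f χ ≠ 0 :=
      ne_iff.1 ((map_ne_zero_iff _ fourierLinearMap_injective).2 hf)
    refine ⟨χ (-a) * f a, χ, a, eigenPeriods f χ, mul_ne_zero (χ.val_isUnit _).ne_zero ha,
      fun x => eq_mul_addChar_of_sub_mem_eigenPeriods, fun x => not_imp_comm.1 fun hx => ?_⟩
    have hoverlap : ¬ Disjoint (support f) (support (τ (x - a) f)) :=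
      not_disjoint_iff.2 ⟨x, hx, by rwa [mem_support, translate_apply, sub_sub_cancel]⟩
    obtain ⟨c, hc⟩ :=
      (exists_translate_eq_smul_or_disjoint_support hf heq (x - a)).resolve_right hoverlap
    exact mem_eigenPeriods_of_translate_eq_smul hχ hc
  · rintro ⟨l, χ, a, H, hl, hmem, hnot_mem⟩
    exact (finrank_translateSpan_mul_ncard_support_le_card hl hmem hnot_mem).antisymm
      (card_le_finrank_translateSpan_mul_ncard_support hf)
end

section
/- Let (G,+) be a finite abelian group and E a field of characteristic 0 or of characteristic p not dividing |G| containing a primitive N-th root of unity, N = exp(G). Then for every nonzero function f : G → E with Fourier transform f̂, |supp(f)| · |supp(f̂)| ≥ |G| + |supp(f)| − |H(supp(f))|, where H(supp(f)) = {g ∈ G : g + supp(f) = supp(f)} is the stabilizer of supp(f) in G. -/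
/-!
Let `A` be the support of `f` and `V` the span of its translates. Fourier inversion puts `V` inside
the span of the characters in the support of `f̂`, so `dim V ≤ |supp f̂|`. The translates vanishing
at `0` span a proper subspace of `V`, and a basis of that subspace chosen among them has the same
joint support as all of them, so this joint support has at most `(dim V - 1) |A|` points. It equals
`A - Aᶜ`, whose complement consists of the `g` with `g + Aᶜ ⊆ Aᶜ`; as `G` is finite, this is the
stabilizer of `A`.
-/

open Function Set

open Module Submodule
open scoped Pointwise translate

section Characters

variable {G M R : Type*} [AddCommGroup G] [CommMonoid M] [CommSemiring R] [IsDomain R]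

lemma hasEnoughRootsOfUnity_exponent_multiplicative
    [h : HasEnoughRootsOfUnity M (AddMonoid.exponent G)] :
    HasEnoughRootsOfUnity M (Monoid.exponent (Multiplicative G)) := by
  rwa [Monoid.exponent_multiplicative]

variable [Finite G]

lemma natCard_addChar [HasEnoughRootsOfUnity M (AddMonoid.exponent G)] :
    Nat.card (AddChar G M) = Nat.card G := by
  have := hasEnoughRootsOfUnity_exponent_multiplicative (G := G) (M := M)
  calc Nat.card (AddChar G M)
      = Nat.card (Multiplicative G →* Mˣ) :=
        Nat.card_congr (AddChar.toMonoidHomEquiv.trans MonoidHom.toHomUnitsMulEquiv.toEquiv)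
    _ = Nat.card (Multiplicative G) := CommGroup.card_monoidHom_of_hasEnoughRootsOfUnity _ M
    _ = Nat.card G := Nat.card_congr Multiplicative.toAdd

lemma finite_addChar_s18 [HasEnoughRootsOfUnity M (AddMonoid.exponent G)] : Finite (AddChar G M) :=
  Nat.finite_of_card_ne_zero (natCard_addChar.trans_ne Nat.card_pos.ne')

lemma exists_addChar_apply_ne_one [HasEnoughRootsOfUnity M (AddMonoid.exponent G)]
    {a : G} (ha : a ≠ 0) : ∃ χ : AddChar G M, χ a ≠ 1 := by
  have := hasEnoughRootsOfUnity_exponent_multiplicative (G := G) (M := M)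
  obtain ⟨φ, hφ⟩ := CommGroup.exists_apply_ne_one_of_hasEnoughRootsOfUnity (Multiplicative G) M
    (a := .ofAdd a) (by simpa using ha)
  exact ⟨AddChar.toMonoidHomEquiv.symm ((Units.coeHom M).comp φ), by simpa using hφ⟩

lemma sum_addChar_apply_eq_ite [DecidableEq G] [Fintype (AddChar G R)]
    [HasEnoughRootsOfUnity R (AddMonoid.exponent G)] (a : G) :
    ∑ χ : AddChar G R, χ a = if a = 0 then (Nat.card G : R) else 0 := by
  classical
  have doubleDualEmb_eq_zero_iff :
      (AddChar.doubleDualEmb a : AddChar (AddChar G R) R) = 0 ↔ a = 0 := by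
    refine ⟨fun h => ?_, fun h => by rw [h, map_zero]⟩
    by_contra ha
    obtain ⟨χ, hχ⟩ := exists_addChar_apply_ne_one (M := R) ha
    exact hχ (DFunLike.congr_fun h χ)
  simpa [doubleDualEmb_eq_zero_iff, ← Nat.card_eq_fintype_card, natCard_addChar] using
    AddChar.sum_eq_ite (AddChar.doubleDualEmb a : AddChar (AddChar G R) R)

end Characters

section FourierInversion

variable {G E : Type*} [AddCommGroup G] [Fintype G] [Field E]
  [HasEnoughRootsOfUnity E (AddMonoid.exponent G)]

theorem sum_fourierTransform_mul_addChar_apply [Fintype (AddChar G E)] (f : G → E) (x : G) :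
    ∑ χ, fourierTransform f χ * χ x = Fintype.card G * f x := by
  classical
  calc ∑ χ, fourierTransform f χ * χ x
      = ∑ y, f y * ∑ χ : AddChar G E, χ (x - y) := by
        simp only [fourierTransform, Finset.sum_mul, Finset.mul_sum, mul_assoc,
          ← AddChar.map_add_eq_mul, neg_add_eq_sub]
        exact Finset.sum_comm
    _ = Fintype.card G * f x := by
        simp [sum_addChar_apply_eq_ite, sub_eq_zero, mul_comm]

lemma translate_mem_span_addChar (hG : (Fintype.card G : E) ≠ 0) (f : G → E) (g : G) :
    τ g f ∈ span E ((fun χ : AddChar G E => (χ : G → E)) '' support (fourierTransform f)) := by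
  have := finite_addChar_s18 (G := G) (M := E)
  have := Fintype.ofFinite (AddChar G E)
  have translate_eq_sum : τ g f =
      ∑ χ, ((Fintype.card G : E)⁻¹ * (fourierTransform f χ * χ (-g))) • (χ : G → E) := by
    ext x
    simp only [translate_apply, Finset.sum_apply, Pi.smul_apply, smul_eq_mul]
    rw [← inv_mul_cancel_left₀ hG (f (x - g)), ← sum_fourierTransform_mul_addChar_apply,
      Finset.mul_sum]
    simp only [mul_assoc, ← AddChar.map_add_eq_mul, neg_add_eq_sub]
  rw [translate_eq_sum]
  refine sum_mem fun χ _ => ?_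
  by_cases hχ : fourierTransform f χ = 0
  · simp [hχ]
  · exact smul_mem _ _ (subset_span ⟨χ, hχ, rfl⟩)

theorem finrank_span_translate_le_ncard_support_fourierTransform
    (hG : (Fintype.card G : E) ≠ 0) (f : G → E) :
    finrank E (span E (range (τ · f))) ≤ (support (fourierTransform f)).ncard := by
  have := finite_addChar_s18 (G := G) (M := E)
  have := Fintype.ofFinite (support (fourierTransform f))
  calc finrank E (span E (range (τ · f)))
      ≤ finrank E (span E (range fun χ : support (fourierTransform f) => (χ.1 : G → E))) := by
        refine finrank_mono (span_le.2 ?_)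
        rintro _ ⟨g, rfl⟩
        simpa only [image_eq_range, SetLike.mem_coe] using translate_mem_span_addChar hG f g
    _ ≤ Fintype.card (support (fourierTransform f)) := finrank_range_le_card _
    _ = (support (fourierTransform f)).ncard := Set.fintypeCard_eq_ncard _

end FourierInversion

section SpanOfFunctions

lemma biUnion_support_span {R X : Type*} [Semiring R] (S : Set (X → R)) :
    ⋃ h ∈ span R S, support h = ⋃ h ∈ S, support h := by
  refine (iUnion₂_subset fun h hh x hx => ?_).antisymm (biUnion_mono subset_span fun _ _ => le_rfl)
  by_contra hxS
  have span_le_ker : span R S ≤ LinearMap.ker (LinearMap.proj x : (X → R) →ₗ[R] R) :=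
    span_le.2 fun k hk => not_not.1 fun hkx => hxS (mem_biUnion hk hkx)
  exact hx (span_le_ker hh)

lemma ncard_biUnion_support_le_finrank_mul {K X : Type*} [DivisionRing K] [Finite X]
    {S : Set (X → K)} {n : ℕ} (hS : ∀ h ∈ S, (support h).ncard ≤ n) :
    (⋃ h ∈ S, support h).ncard ≤ finrank K (span K S) * n := by
  obtain ⟨B, hBS, hBcard, hBspan, -⟩ := exists_finset_span_eq_linearIndepOn K S
  calc (⋃ h ∈ S, support h).ncard
      = (⋃ h ∈ B, support h).ncard := by
        rw [← biUnion_support_span, ← hBspan, biUnion_support_span]; rfl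
    _ ≤ ∑ h ∈ B, (support h).ncard := Finset.set_ncard_biUnion_le _ _
    _ ≤ finrank K (span K S) * n := by
        rw [← hBcard]; exact Finset.sum_le_card_nsmul _ _ _ fun h hh => hS h (hBS hh)

lemma finrank_span_sep_map_eq_zero_lt {K V W : Type*} [DivisionRing K] [AddCommGroup V]
    [Module K V] [AddCommGroup W] [Module K W] [FiniteDimensional K V] (φ : V →ₗ[K] W)
    {S : Set V} {v : V} (hv : v ∈ S) (hφv : φ v ≠ 0) :
    finrank K (span K {w ∈ S | φ w = 0}) < finrank K (span K S) := by
  have span_le_ker : span K {w ∈ S | φ w = 0} ≤ LinearMap.ker φ := span_le.2 fun w hw => hw.2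
  refine finrank_lt_finrank_of_lt (SetLike.lt_iff_le_and_exists.2 ⟨span_mono (sep_subset _ _), ?_⟩)
  exact ⟨v, subset_span hv, fun hmem => hφv (span_le_ker hmem)⟩

end SpanOfFunctions

section Translates

lemma compl_stabilizer_eq_sub_compl {G : Type*} [AddGroup G] {s : Set G} (hs : s.Finite) :
    (AddAction.stabilizer G s : Set G)ᶜ = s - sᶜ := by
  ext g
  rw [mem_compl_iff, SetLike.mem_coe, AddAction.mem_stabilizer_set_iff_subset_vadd_set hs,
    Set.not_subset, Set.mem_sub]
  simp only [mem_vadd_set_iff_neg_vadd_mem, vadd_eq_add, mem_compl_iff]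
  refine exists_congr fun a => and_congr_right fun _ => ⟨fun ha => ⟨-g + a, ha, ?_⟩, ?_⟩
  · simp [sub_eq_add_neg]
  · rintro ⟨b, hb, rfl⟩
    simpa [sub_eq_add_neg] using hb

variable {G K : Type*} [AddCommGroup G]

lemma biUnion_support_translate_sep_apply_zero [Zero K] (f : G → K) :
    ⋃ h ∈ {h ∈ range (τ · f) | h 0 = 0}, support h = support f - (support f)ᶜ := by
  ext x
  simp only [mem_iUnion, mem_sep_iff, exists_prop, Set.mem_sub, mem_compl_iff, mem_support, not_not]
  constructor
  · rintro ⟨_, ⟨⟨g, rfl⟩, hg⟩, hx⟩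
    exact ⟨x - g, hx, -g, by simpa using hg, by abel⟩
  · rintro ⟨a, ha, b, hb, rfl⟩
    exact ⟨τ (-b) f, ⟨mem_range_self _, by simpa using hb⟩, by simpa using ha⟩

variable [Finite G] [DivisionRing K]

lemma ncard_compl_stabilizer_support_le (f : G → K) :
    (AddAction.stabilizer G (support f) : Set G)ᶜ.ncard ≤
      finrank K (span K {h ∈ range (τ · f) | h 0 = 0}) * (support f).ncard := by
  rw [compl_stabilizer_eq_sub_compl (toFinite _), ← biUnion_support_translate_sep_apply_zero]
  refine ncard_biUnion_support_le_finrank_mul ?_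
  rintro _ ⟨⟨g, rfl⟩, -⟩
  rw [support_translate, ncard_vadd_set]

lemma finrank_span_translate_sep_apply_zero_lt {f : G → K} (hf : f ≠ 0) :
    finrank K (span K {h ∈ range (τ · f) | h 0 = 0}) < finrank K (span K (range (τ · f))) := by
  obtain ⟨a, ha⟩ := ne_iff.1 hf
  exact finrank_span_sep_map_eq_zero_lt (LinearMap.proj (R := K) (φ := fun _ : G => K) 0)
    (mem_range_self (-a)) (by simpa using ha)

theorem natCard_add_ncard_support_le {f : G → K} (hf : f ≠ 0) :
    Nat.card G + (support f).ncard ≤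
      finrank K (span K (range (τ · f))) * (support f).ncard +
        (AddAction.stabilizer G (support f) : Set G).ncard := by
  have card_eq := ncard_add_ncard_compl (AddAction.stabilizer G (support f) : Set G)
  have compl_le := ncard_compl_stabilizer_support_le f
  have finrank_le := Nat.mul_le_mul_right (support f).ncard
    (Nat.succ_le_of_lt (finrank_span_translate_sep_apply_zero_lt hf))
  rw [Nat.succ_mul] at finrank_le
  lia

end Translates

/-- the dual sharpened Donoho–Stark uncertainty principle:
`|supp f|·|supp f̂| ≥ |G| + |supp f| - |H(supp f)|`, where `H(supp f)` is the stabilizer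
of `supp f` in `G`. -/
theorem stmt_18 {G E : Type*} [AddCommGroup G] [Fintype G] [Field E]
    (hchar : (Fintype.card G : E) ≠ 0)
    (hroot : ∃ ζ : E, IsPrimitiveRoot ζ (AddMonoid.exponent G))
    (f : G → E) (hf : f ≠ 0) :
    (Fintype.card G : ℤ) + (Function.support f).ncard -
        ({g : G | (fun x => g + x) '' Function.support f = Function.support f} : Set G).ncard ≤
      ((Function.support f).ncard : ℤ) * (Function.support (fourierTransform f)).ncard := by
  have : NeZero (AddMonoid.exponent G) := ⟨AddMonoid.exponent_ne_zero_of_finite⟩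
  have : HasEnoughRootsOfUnity E (AddMonoid.exponent G) := ⟨hroot, inferInstance⟩
  have card_le := natCard_add_ncard_support_le hf
  have finrank_le := finrank_span_translate_le_ncard_support_fourierTransform hchar f
  have stabilizer_eq : {g : G | (fun x => g + x) '' support f = support f} =
      (AddAction.stabilizer G (support f) : Set G) := rfl
  have nat_bound : Fintype.card G + (support f).ncard ≤
      (support f).ncard * (support (fourierTransform f)).ncard +
        (AddAction.stabilizer G (support f) : Set G).ncard := by
    rw [← Nat.card_eq_fintype_card, mul_comm (support f).ncard]
    exact card_le.trans (by gcongr)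
  rw [stabilizer_eq]
  lia
end
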